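/- arXiv:1705.00858 — 2 statements merged into one kernel-verified Lean document; each statement's English description precedes it below -/
import Mathlib

section
/- Fix p > 1. Let {I_j} be a Cantor construction whose Cantor set C_p has Lebesgue measure zero, i.e. |I_l^k| = Σ_{h≥0} Σ_{m=0}^{2^h−1} |G_{2^h·l+m}^{k+h}| for all k, l, and whose gaps satisfy |G_l^k| = (2^k + l)^{−p} for all k ≥ 0 and 0 ≤ l ≤ 2^k − 1. Let μ_{1/p} be the generalized Hausdorff measure associated to the gauge function h(w,δ) = δ^{1/p}. Then μ_{1/p}(C_p) = 2·log 2/(2^p − 2)^{1/p}. -/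
/-!
Write `N = 2^k + l` for the index of the basic interval `I_l^k`, `s = 1/p` and
`K = 2^p / (2^p - 2)`. Since the gaps inside `I_l^k` at depth `h` are `i^{-p}` for
`2^h N ≤ i < 2^h (N + 1)`, comparison with geometric series gives
`K (N+1)^{-p} ≤ |I_l^k| ≤ K N^{-p}` (`len_bounds`). Hence `∑_l |I_l^k|^s` is squeezed between
`K^s ∑ 1/(N+1)` and `K^s ∑ 1/N`, and converges to `K^s log 2`, which is the claimed value
(`level_sum`). Covering by the basic intervals of step `k` gives the upper bound (`muH_le`).

For the lower bound, the upper estimate for the length of the two children of `I_l^k` says that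
the gap `N^{-p}` is at least `2^p - 2` times the length of either child. By concavity of
`δ ↦ δ^s`, an interval that meets both children then satisfies `|J|^s ≥ |J₁|^s + |J₂|^s`, where
`J₁`, `J₂` are its parts in the children (`rpow_superadd`). Iterating, `|J|^s` dominates
`∑ |I_l^n|^s` over all step-`n` basic intervals contained in `J` (`sum_contained_le`). By
compactness every cover can be replaced by a finite one of almost the same gauge such that each
basic interval of a sufficiently late step lies in a single member, so the total gauge of the
cover is at least `∑_l |I_l^n|^s`, up to an arbitrarily small error (`le_muH`).
-/

open MeasureTheory Set Filter
open scoped ENNReal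

noncomputable section

/-- `Iv w δ` is the closed interval with midpoint `w` and diameter `δ`. -/
def Iv (w δ : ℝ) : Set ℝ := Set.Icc (w - δ / 2) (w + δ / 2)

/-- A Cantor construction on `ℝ`: a family of nonempty closed intervals
`I j = [a j, b j]` indexed by finite binary words `j : List Bool`, such that
`I (j ++ [false])` and `I (j ++ [true])` are disjoint subsets of `I j` sharing,
respectively, the left and the right endpoint with `I j`, and such that the
maximal diameter at level `n` tends to `0`. -/
structure CantorConstruction where
  a : List Bool → ℝ
  b : List Bool → ℝ
  le : ∀ j, a j ≤ b j
  left0 : ∀ j, a (j ++ [false]) = a j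
  right1 : ∀ j, b (j ++ [true]) = b j
  sub0 : ∀ j, b (j ++ [false]) ≤ b j
  sub1 : ∀ j, a j ≤ a (j ++ [true])
  disj : ∀ j, b (j ++ [false]) < a (j ++ [true])
  shrink : ∀ ε > (0 : ℝ), ∃ N : ℕ, ∀ j : List Bool, N ≤ j.length → b j - a j < ε

namespace CantorConstruction

variable (C : CantorConstruction)

/-- The basic interval `I_j`. -/
def I (j : List Bool) : Set ℝ := Set.Icc (C.a j) (C.b j)

/-- The diameter `|I_j|` of the basic interval `I_j`. -/
def len (j : List Bool) : ℝ := C.b j - C.a j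

/-- The midpoint of the basic interval `I_j`. -/
def mid (j : List Bool) : ℝ := (C.a j + C.b j) / 2

/-- The gap `G_j = I_j \ (I_{j0} ∪ I_{j1})`. -/
def gap (j : List Bool) : Set ℝ :=
  Set.Ioo (C.b (j ++ [false])) (C.a (j ++ [true]))

/-- The diameter `|G_j|` of the gap `G_j`. -/
def gapLen (j : List Bool) : ℝ := C.a (j ++ [true]) - C.b (j ++ [false])

/-- The Cantor set `C = ⋂_n ⋃_{|j| = n} I_j` associated to the construction. -/
def cantorSet : Set ℝ := ⋂ n : ℕ, ⋃ j ∈ {j : List Bool | j.length = n}, C.I j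

/-- `ν` is the Cantor measure of the construction: a Borel probability measure on `ℝ`
with `ν (I_j) = 2^{-|j|}` for every binary word `j`. -/
def IsCantorMeasure (ν : Measure ℝ) : Prop :=
  IsProbabilityMeasure ν ∧ ∀ j : List Bool, ν (C.I j) = (2 ^ j.length : ℝ≥0∞)⁻¹

end CantorConstruction

/-- `word k l` is the length-`k` binary expansion of `l` (most significant digit first),
so that `I_l^k = I (word k l)` in the step/position indexing. -/
def word : ℕ → ℕ → List Bool
  | 0, _ => []
  | k + 1, l => word k (l / 2) ++ [decide (l % 2 = 1)]

/-- `h : ℝ × (0,∞) → (0,∞)` is a gauge function: continuous, positive,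
`h (w, δ) → 0` as `δ → 0` for every `w`, and increasing as an interval function. -/
def IsGauge (h : ℝ → ℝ → ℝ) : Prop :=
  ContinuousOn (Function.uncurry h) {p : ℝ × ℝ | 0 < p.2} ∧
  (∀ w δ : ℝ, 0 < δ → 0 < h w δ) ∧
  (∀ w : ℝ, Tendsto (h w) (nhdsWithin 0 (Set.Ioi 0)) (nhds 0)) ∧
  (∀ w δ w' δ' : ℝ, 0 < δ → 0 < δ' → Iv w δ ⊆ Iv w' δ' → h w δ ≤ h w' δ')

/-- The generalized Hausdorff measure `μ_h` associated to a gauge function `h`: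
`μ_h(E) = lim_{δ → 0} inf { Σ_k h (w_k, δ_k) }`, the infimum being over countable
covers of `E` by intervals `Iv w_k δ_k` with `0 < δ_k ≤ δ`. -/
def muH (h : ℝ → ℝ → ℝ) (E : Set ℝ) : ℝ≥0∞ :=
  ⨆ (δ : ℝ) (_ : 0 < δ),
    ⨅ (c : ℕ → ℝ × ℝ)
      (_ : (∀ k, 0 < (c k).2 ∧ (c k).2 ≤ δ) ∧ E ⊆ ⋃ k, Iv (c k).1 (c k).2),
      ∑' k, ENNReal.ofReal (h (c k).1 (c k).2)

/-- Second partial derivative `∂²h/∂w²`. -/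
def d11 (h : ℝ → ℝ → ℝ) (w δ : ℝ) : ℝ :=
  deriv (fun x => deriv (fun y => h y δ) x) w

/-- Mixed second partial derivative `∂²h/∂w∂δ`. -/
def d12 (h : ℝ → ℝ → ℝ) (w δ : ℝ) : ℝ :=
  deriv (fun x => deriv (fun d => h x d) δ) w

/-- Second partial derivative `∂²h/∂δ²`. -/
def d22 (h : ℝ → ℝ → ℝ) (w δ : ℝ) : ℝ :=
  deriv (fun d => deriv (fun e => h w e) d) δ

end

/-! ### Binary words and basic intervals -/

lemma word_false (k l : ℕ) : word (k + 1) (2 * l) = word k l ++ [false] := by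
  simp [word]

lemma word_true (k l : ℕ) : word (k + 1) (2 * l + 1) = word k l ++ [true] := by
  have h1 : (2 * l + 1) / 2 = l := by omega
  have h2 : (2 * l + 1) % 2 = 1 := by omega
  simp [word, h1, h2]

lemma word_length (k l : ℕ) : (word k l).length = k := by
  induction k generalizing l with
  | zero => rfl
  | succ k ih => simp [word, ih]

lemma exists_word (k : ℕ) (j : List Bool) (hj : j.length = k) :
    ∃ l < 2 ^ k, j = word k l := by
  induction k generalizing j with
  | zero => exact ⟨0, by simp, by simpa [word] using hj⟩
  | succ k ih =>
    rcases List.eq_nil_or_concat j with rfl | ⟨j', c, rfl⟩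
    · simp at hj
    · rw [List.concat_eq_append] at hj ⊢
      obtain ⟨l, hl, rfl⟩ := ih j' (by simpa using hj)
      cases c
      · exact ⟨2 * l, by rw [pow_succ]; omega, (word_false k l).symm⟩
      · exact ⟨2 * l + 1, by rw [pow_succ]; omega, (word_true k l).symm⟩

/-- The descendants of `I_l^k` after `n` further steps, i.e. the intervals
`I_{2^n l + m}^{k+n}` with `m < 2^n`, are contained in `I_l^k`. -/
lemma desc_sub (C : CantorConstruction) (n k l m : ℕ) (hm : m < 2 ^ n) :
    C.a (word k l) ≤ C.a (word (k + n) (2 ^ n * l + m)) ∧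
      C.b (word (k + n) (2 ^ n * l + m)) ≤ C.b (word k l) := by
  induction n generalizing m with
  | zero => obtain rfl : m = 0 := by simpa using hm
            simp
  | succ n ih =>
    have hm2 : m / 2 < 2 ^ n := by rw [pow_succ] at hm; omega
    obtain ⟨h1, h2⟩ := ih (m / 2) hm2
    rcases Nat.mod_two_eq_zero_or_one m with h | h
    · have e : 2 ^ (n + 1) * l + m = 2 * (2 ^ n * l + m / 2) := by
        rw [pow_succ, mul_add, ← mul_assoc, mul_comm (2 ^ n) 2]; omega
      rw [e, ← add_assoc, word_false, C.left0]
      exact ⟨h1, (C.sub0 _).trans h2⟩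
    · have e : 2 ^ (n + 1) * l + m = 2 * (2 ^ n * l + m / 2) + 1 := by
        rw [pow_succ, mul_add, ← mul_assoc, mul_comm (2 ^ n) 2]; omega
      rw [e, ← add_assoc, word_true, C.right1]
      exact ⟨h1.trans (C.sub1 _), h2⟩

lemma desc_left (C : CantorConstruction) (n k l : ℕ) :
    C.a (word (k + n) (2 ^ n * l)) = C.a (word k l) := by
  induction n with
  | zero => simp
  | succ n ih =>
    have e : 2 ^ (n + 1) * l = 2 * (2 ^ n * l) := by ring
    rw [e, ← add_assoc, word_false, C.left0, ih]

lemma left_mem_cantorSet (C : CantorConstruction) (k l : ℕ) :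
    C.a (word k l) ∈ C.cantorSet := by
  simp only [CantorConstruction.cantorSet, mem_iInter, mem_iUnion, mem_ofPred_eq,
    CantorConstruction.I, mem_Icc]
  intro m
  rcases le_total m k with h | h
  · obtain ⟨d, rfl⟩ := Nat.exists_eq_add_of_le h
    have := desc_sub C d m (l / 2 ^ d) (l % 2 ^ d) (Nat.mod_lt _ (by positivity))
    rw [Nat.div_add_mod] at this
    exact ⟨_, word_length m (l / 2 ^ d), this.1, (C.le _).trans this.2⟩
  · obtain ⟨d, rfl⟩ := Nat.exists_eq_add_of_le h
    exact ⟨_, word_length (k + d) (2 ^ d * l), (desc_left C d k l).le,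
      (desc_left C d k l) ▸ C.le _⟩

lemma isCompact_limitSet (C : CantorConstruction) : IsCompact C.cantorSet := by
  refine (isCompact_Icc (a := C.a []) (b := C.b [])).of_isClosed_subset ?_ ?_
  · refine isClosed_iInter fun n => Set.Finite.isClosed_biUnion
      (List.finite_length_eq Bool n) fun j _ => isClosed_Icc
  · intro x hx
    have := mem_iInter.1 hx 0
    simpa [CantorConstruction.I] using this

/-! ### Length estimates -/

/-- With `N = 2^k + l`: the sum of `i^{-p}` over `2^h N ≤ i < 2^h (N + 1)` against its largest
and smallest possible terms, written in the form of geometric progressions in `h`. -/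
lemma block_bounds {p : ℝ} (hp : 1 < p) (k l h : ℕ) :
    ((2 ^ k + l : ℝ) + 1) ^ (-p) * (2 / 2 ^ p) ^ h ≤
      ∑ m ∈ Finset.range (2 ^ h), ((2 ^ (k + h) + ((2 ^ h * l + m : ℕ) : ℝ))) ^ (-p) ∧
    ∑ m ∈ Finset.range (2 ^ h), ((2 ^ (k + h) + ((2 ^ h * l + m : ℕ) : ℝ))) ^ (-p) ≤
      (2 ^ k + l : ℝ) ^ (-p) * (2 / 2 ^ p) ^ h := by
  have key : ∀ x : ℝ, 0 ≤ x → x ^ (-p) * (2 / 2 ^ p) ^ h =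
      (2 ^ h : ℕ) • ((2 : ℝ) ^ h * x) ^ (-p) := by
    intro x hx
    have : ((2 : ℝ) ^ h) ^ (-p) = ((2 ^ p)⁻¹) ^ h := by
      rw [← Real.rpow_neg (by norm_num), ← Real.rpow_natCast, ← Real.rpow_natCast,
        ← Real.rpow_mul (by norm_num), ← Real.rpow_mul (by norm_num), mul_comm]
    rw [Real.mul_rpow (by positivity) hx, this, nsmul_eq_mul, div_eq_mul_inv, mul_pow]
    push_cast; ring
  have hN : (0 : ℝ) < 2 ^ k + l := by positivity
  have hh : (0 : ℝ) < 2 ^ h := by positivity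
  constructor
  · rw [key _ (by positivity)]
    conv_lhs => rw [← Finset.card_range (2 ^ h)]
    refine Finset.card_nsmul_le_sum _ _ _ fun m hm => ?_
    have hm' : (m : ℝ) ≤ 2 ^ h := by exact_mod_cast (Finset.mem_range.1 hm).le
    refine Real.rpow_le_rpow_of_nonpos (by positivity) ?_ (by linarith)
    push_cast
    rw [pow_add]; nlinarith
  · rw [key _ (by positivity)]
    conv_rhs => rw [← Finset.card_range (2 ^ h)]
    refine Finset.sum_le_card_nsmul _ _ _ fun m hm => ?_
    refine Real.rpow_le_rpow_of_nonpos (by positivity) ?_ (by linarith)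
    push_cast
    rw [pow_add]; nlinarith [(Nat.cast_nonneg m : (0 : ℝ) ≤ m)]

lemma two_lt_two_rpow {p : ℝ} (hp : 1 < p) : (2 : ℝ) < 2 ^ p := by
  simpa using Real.rpow_lt_rpow_of_exponent_lt (x := 2) (by norm_num) hp

/-- With `N = 2^k + l` and `K = 2^p / (2^p - 2)`, the basic interval satisfies
`K (N+1)^{-p} ≤ |I_l^k| ≤ K N^{-p}`. -/
lemma len_bounds {p : ℝ} (hp : 1 < p) (C : CantorConstruction)
    (hzero : ∀ k l : ℕ, l < 2 ^ k →
      C.len (word k l) =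
        ∑' hh : ℕ, ∑ m ∈ Finset.range (2 ^ hh),
          C.gapLen (word (k + hh) (2 ^ hh * l + m)))
    (hgap : ∀ k l : ℕ, l < 2 ^ k →
      C.gapLen (word k l) = ((2 ^ k + l : ℝ)) ^ (-p)) (k l : ℕ) (hl : l < 2 ^ k) :
    ((2 ^ k + l : ℝ) + 1) ^ (-p) * (2 ^ p / (2 ^ p - 2)) ≤ C.len (word k l) ∧
    C.len (word k l) ≤ (2 ^ k + l : ℝ) ^ (-p) * (2 ^ p / (2 ^ p - 2)) := by
  have h2 := two_lt_two_rpow hp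
  have hr0 : (0 : ℝ) ≤ 2 / 2 ^ p := by positivity
  have hr1 : (2 : ℝ) / 2 ^ p < 1 := by rw [div_lt_one (by linarith)]; exact h2
  have hg := hasSum_geometric_of_lt_one hr0 hr1
  have hK : (1 - (2 : ℝ) / 2 ^ p)⁻¹ = 2 ^ p / (2 ^ p - 2) := by
    rw [one_sub_div (by linarith), inv_div]
  rw [hK] at hg
  have e : C.len (word k l) = ∑' h : ℕ, ∑ m ∈ Finset.range (2 ^ h),
      ((2 ^ (k + h) + ((2 ^ h * l + m : ℕ) : ℝ))) ^ (-p) := by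
    rw [hzero k l hl]
    refine tsum_congr fun h => Finset.sum_congr rfl fun m hm => ?_
    refine hgap _ _ ?_
    have := Finset.mem_range.1 hm
    calc 2 ^ h * l + m < 2 ^ h * (l + 1) := by rw [mul_add, mul_one]; omega
      _ ≤ 2 ^ h * 2 ^ k := Nat.mul_le_mul_left _ hl
      _ = 2 ^ (k + h) := by rw [pow_add, mul_comm]
  have hs : Summable fun h : ℕ => ∑ m ∈ Finset.range (2 ^ h),
      ((2 ^ (k + h) + ((2 ^ h * l + m : ℕ) : ℝ))) ^ (-p) :=
    Summable.of_nonneg_of_le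
      (fun h => Finset.sum_nonneg fun m _ => by positivity)
      (fun h => (block_bounds hp k l h).2) (hg.mul_left _).summable
  rw [e]
  exact ⟨hasSum_le (fun h => (block_bounds hp k l h).1) (hg.mul_left _) hs.hasSum,
    hasSum_le (fun h => (block_bounds hp k l h).2) hs.hasSum (hg.mul_left _)⟩

/-! ### Superadditivity of `δ ↦ δ^{1/p}` across gaps -/

/-- Two intervals of lengths `u`, `v` separated by a gap `g` that is at least `2^p - 2` times
either length. Concavity gives `u^{1/p} + v^{1/p} ≤ 2 ((u+v)/2)^{1/p} = (2^p (u+v)/2)^{1/p}`. -/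
lemma rpow_superadd {p u v g : ℝ} (hp : 1 < p) (hu : 0 ≤ u) (hv : 0 ≤ v)
    (hug : (2 ^ p - 2) * u ≤ g) (hvg : (2 ^ p - 2) * v ≤ g) :
    u ^ (1 / p) + v ^ (1 / p) ≤ (u + g + v) ^ (1 / p) := by
  have hs0 : 0 ≤ 1 / p := by positivity
  have hs1 : 1 / p ≤ 1 := by rw [div_le_one (by linarith)]; exact hp.le
  have hc := (Real.concaveOn_rpow hs0 hs1).2 (mem_Ici.2 hu) (mem_Ici.2 hv)
    (by norm_num : (0 : ℝ) ≤ 1 / 2) (by norm_num : (0 : ℝ) ≤ 1 / 2) (by norm_num)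
  simp only [smul_eq_mul] at hc
  have h2 : ((2 : ℝ) ^ p) ^ (1 / p) = 2 := by
    rw [← Real.rpow_mul (by norm_num), mul_one_div_cancel (by linarith), Real.rpow_one]
  calc u ^ (1 / p) + v ^ (1 / p) ≤ 2 * (1 / 2 * u + 1 / 2 * v) ^ (1 / p) := by linarith
    _ = (2 ^ p * (1 / 2 * u + 1 / 2 * v)) ^ (1 / p) := by
        rw [Real.mul_rpow (by positivity) (by positivity), h2]
    _ ≤ (u + g + v) ^ (1 / p) :=
        Real.rpow_le_rpow (by positivity) (by nlinarith) hs0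

/-- The descendants of `I_l^k` after `n` further steps that lie in `[x, y]` have total `1/p`-gauge at most
`(y - x)^{1/p}`. -/
lemma sum_contained_le {p : ℝ} (hp : 1 < p) (C : CantorConstruction)
    (hH : ∀ k l : ℕ, l < 2 ^ k →
      (2 ^ p - 2) * C.len (word (k + 1) (2 * l)) ≤ C.gapLen (word k l) ∧
      (2 ^ p - 2) * C.len (word (k + 1) (2 * l + 1)) ≤ C.gapLen (word k l))
    (n : ℕ) : ∀ (k l : ℕ) (x y : ℝ), l < 2 ^ k → x ≤ y →
    ∑ m ∈ Finset.range (2 ^ n),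
      (if x ≤ C.a (word (k + n) (2 ^ n * l + m)) ∧ C.b (word (k + n) (2 ^ n * l + m)) ≤ y
        then C.len (word (k + n) (2 ^ n * l + m)) ^ (1 / p) else 0) ≤ (y - x) ^ (1 / p) := by
  have hs0 : 0 ≤ 1 / p := by positivity
  have h2 := two_lt_two_rpow hp
  induction n with
  | zero =>
    intro k l x y hl hxy
    have h0 : 0 ≤ (y - x) ^ (1 / p) := Real.rpow_nonneg (by linarith) _
    simp only [pow_zero, Finset.range_one, Finset.sum_singleton, add_zero, one_mul]
    split_ifs with h
    · refine Real.rpow_le_rpow (sub_nonneg.2 (C.le _)) ?_ hs0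
      simp only [CantorConstruction.len]; linarith [h.1, h.2]
    · exact h0
  | succ n ih =>
    intro k l x y hl hxy
    have hl0 : 2 * l < 2 ^ (k + 1) := by rw [pow_succ]; omega
    have hl1 : 2 * l + 1 < 2 ^ (k + 1) := by rw [pow_succ]; omega
    have e0 : ∀ m, 2 ^ (n + 1) * l + m = 2 ^ n * (2 * l) + m := fun m => by ring
    have e1 : ∀ m, 2 ^ (n + 1) * l + (2 ^ n + m) = 2 ^ n * (2 * l + 1) + m := fun m => by ring
    have ek : k + (n + 1) = (k + 1) + n := by ring
    have hsub0 := fun m (hm : m ∈ Finset.range (2 ^ n)) =>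
      desc_sub C n (k + 1) (2 * l) m (Finset.mem_range.1 hm)
    have hsub1 := fun m (hm : m ∈ Finset.range (2 ^ n)) =>
      desc_sub C n (k + 1) (2 * l + 1) m (Finset.mem_range.1 hm)
    have hd : C.b (word (k + 1) (2 * l)) < C.a (word (k + 1) (2 * l + 1)) := by
      rw [word_false, word_true]; exact C.disj _
    rw [pow_succ 2 n, mul_two, Finset.sum_range_add]
    rw [← mul_two, ← pow_succ]
    simp only [e1, ek]
    simp only [e0]
    have ih0 := ih (k + 1) (2 * l)
    have ih1 := ih (k + 1) (2 * l + 1)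
    by_cases hx : C.b (word (k + 1) (2 * l)) < x
    · -- `[x, y]` misses the left child
      refine le_trans (le_of_eq ?_) (ih1 x y hl1 hxy)
      rw [add_eq_right]
      refine Finset.sum_eq_zero fun m hm => if_neg fun h => ?_
      linarith [h.1, (hsub0 m hm).2, C.le (word (k + 1 + n) (2 ^ n * (2 * l) + m))]
    by_cases hy : y < C.a (word (k + 1) (2 * l + 1))
    · -- `[x, y]` misses the right child
      refine le_trans (le_of_eq ?_) (ih0 x y hl0 hxy)
      rw [add_eq_left]
      refine Finset.sum_eq_zero fun m hm => if_neg fun h => ?_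
      linarith [h.2, (hsub1 m hm).1, C.le (word (k + 1 + n) (2 ^ n * (2 * l + 1) + m))]
    push Not at hx hy
    -- clip `[x, y]` to each of the two children
    set x' := max x (C.a (word (k + 1) (2 * l))) with hx'
    set y' := min y (C.b (word (k + 1) (2 * l + 1))) with hy'
    have hxu : x' ≤ C.b (word (k + 1) (2 * l)) := max_le hx (C.le _)
    have hyv : C.a (word (k + 1) (2 * l + 1)) ≤ y' := le_min hy (C.le _)
    have A0 := ih0 x' _ hl0 hxu
    have A1 := ih1 _ y' hl1 hyv
    have hsup := rpow_superadd (p := p) (u := C.b (word (k + 1) (2 * l)) - x')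
      (v := y' - C.a (word (k + 1) (2 * l + 1))) (g := C.gapLen (word k l)) hp
      (by linarith) (by linarith)
      (le_trans (mul_le_mul_of_nonneg_left (by
        simp only [CantorConstruction.len]
        linarith [le_max_right x (C.a (word (k + 1) (2 * l)))]) (by linarith)) (hH k l hl).1)
      (le_trans (mul_le_mul_of_nonneg_left (by
        simp only [CantorConstruction.len]
        linarith [min_le_right y (C.b (word (k + 1) (2 * l + 1)))]) (by linarith))
        (hH k l hl).2)
    have hfin : (C.b (word (k + 1) (2 * l)) - x' + C.gapLen (word k l) +
        (y' - C.a (word (k + 1) (2 * l + 1)))) ^ (1 / p) ≤ (y - x) ^ (1 / p) := by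
      have hgl : C.gapLen (word k l) =
          C.a (word (k + 1) (2 * l + 1)) - C.b (word (k + 1) (2 * l)) := by
        rw [word_false, word_true]; rfl
      refine Real.rpow_le_rpow (by rw [hgl]; linarith) ?_ hs0
      rw [hgl]
      linarith [le_max_left x (C.a (word (k + 1) (2 * l))),
        min_le_left y (C.b (word (k + 1) (2 * l + 1)))]
    have hite : ∀ {P Q : Prop} [Decidable P] [Decidable Q] (w : List Bool), (P → Q) →
        (if P then C.len w ^ (1 / p) else 0) ≤ (if Q then C.len w ^ (1 / p) else 0) := by
      intro P Q _ _ w hPQ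
      have h0 : 0 ≤ C.len w ^ (1 / p) := Real.rpow_nonneg (sub_nonneg.2 (C.le w)) _
      split_ifs with h1 h2 h2
      exacts [le_rfl, absurd (hPQ h1) h2, h0, le_rfl]
    refine le_trans (add_le_add (le_trans (Finset.sum_le_sum fun m hm => ?_) A0)
      (le_trans (Finset.sum_le_sum fun m hm => ?_) A1)) (hsup.trans hfin)
    · obtain ⟨s1, s2⟩ := hsub0 m hm
      exact hite _ (fun h => ⟨max_le h.1 s1, s2⟩)
    · obtain ⟨s1, s2⟩ := hsub1 m hm
      exact hite _ (fun h => ⟨s1, le_min h.2 s2⟩)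

/-! ### Dyadic blocks of the harmonic series -/

lemma harmonic_block (k : ℕ) :
    Real.log 2 - (1 / 2) ^ k ≤ ∑ l ∈ Finset.range (2 ^ k), 1 / ((2 ^ k + l : ℝ) + 1) ∧
    ∑ l ∈ Finset.range (2 ^ k), 1 / (2 ^ k + l : ℝ) ≤ Real.log 2 + (1 / 2) ^ k := by
  have hpos : ∀ l : ℕ, (0 : ℝ) < 2 ^ k + l := fun l => by positivity
  have htel := Finset.sum_range_sub (fun l : ℕ => Real.log (2 ^ k + l : ℝ)) (2 ^ k)
  have hlog : Real.log (2 ^ k + ((2 ^ k : ℕ) : ℝ)) - Real.log (2 ^ k + ((0 : ℕ) : ℝ)) =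
      Real.log 2 := by
    push_cast
    rw [← Real.log_div (by positivity) (by positivity)]
    congr 1
    field_simp
    ring
  rw [hlog] at htel
  have hdiff := Finset.sum_range_sub' (fun l : ℕ => 1 / (2 ^ k + l : ℝ)) (2 ^ k)
  have hd1 : 1 / (2 ^ k + ((0 : ℕ) : ℝ)) = (1 / 2) ^ k := by simp
  have hd2 : 0 ≤ 1 / (2 ^ k + ((2 ^ k : ℕ) : ℝ)) := by positivity
  rw [hd1, Finset.sum_sub_distrib] at hdiff
  have hup : Real.log 2 ≤ ∑ l ∈ Finset.range (2 ^ k), 1 / (2 ^ k + l : ℝ) := by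
    rw [← htel]
    refine Finset.sum_le_sum fun l _ => ?_
    have h := hpos l
    have h' := hpos (l + 1)
    rw [← Real.log_div h'.ne' h.ne']
    refine (Real.log_le_sub_one_of_pos (by positivity)).trans (le_of_eq ?_)
    push_cast
    field_simp
    ring
  have hlo : ∑ l ∈ Finset.range (2 ^ k), 1 / (2 ^ k + ((l + 1 : ℕ) : ℝ)) ≤ Real.log 2 := by
    rw [← htel]
    refine Finset.sum_le_sum fun l _ => ?_
    have h := hpos l
    have h' := hpos (l + 1)
    rw [← Real.log_div h'.ne' h.ne']
    refine le_trans (le_of_eq ?_) (Real.one_sub_inv_le_log_of_pos (by positivity))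
    push_cast
    field_simp
    ring
  have hcast : ∀ l : ℕ, (2 ^ k + l : ℝ) + 1 = 2 ^ k + ((l + 1 : ℕ) : ℝ) := fun l => by
    push_cast; ring
  simp only [hcast]
  constructor <;> linarith

/-- With `c = 2 / (2^p - 2)^{1/p}`, the sum of the `1/p`-gauges of the intervals of step `k`
is within `c 2^{-k}` of `c log 2`. -/
lemma level_sum {p : ℝ} (hp : 1 < p) (C : CantorConstruction)
    (hlen : ∀ k l : ℕ, l < 2 ^ k →
      ((2 ^ k + l : ℝ) + 1) ^ (-p) * (2 ^ p / (2 ^ p - 2)) ≤ C.len (word k l) ∧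
      C.len (word k l) ≤ (2 ^ k + l : ℝ) ^ (-p) * (2 ^ p / (2 ^ p - 2))) (k : ℕ) :
    2 / ((2 : ℝ) ^ p - 2) ^ (1 / p) * (Real.log 2 - (1 / 2) ^ k) ≤
      ∑ l ∈ Finset.range (2 ^ k), C.len (word k l) ^ (1 / p) ∧
    ∑ l ∈ Finset.range (2 ^ k), C.len (word k l) ^ (1 / p) ≤
      2 / ((2 : ℝ) ^ p - 2) ^ (1 / p) * (Real.log 2 + (1 / 2) ^ k) := by
  have h2 := two_lt_two_rpow hp
  have hs0 : 0 ≤ 1 / p := by positivity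
  have hc : 0 ≤ 2 / ((2 : ℝ) ^ p - 2) ^ (1 / p) :=
    div_nonneg (by norm_num) (Real.rpow_nonneg (by linarith) _)
  have key : ∀ x : ℝ, 0 < x → (x ^ (-p) * (2 ^ p / (2 ^ p - 2))) ^ (1 / p) =
      2 / ((2 : ℝ) ^ p - 2) ^ (1 / p) * (1 / x) := by
    intro x hx
    have hp0 : p ≠ 0 := by positivity
    rw [Real.mul_rpow (by positivity) (div_nonneg (by positivity) (by linarith)),
      Real.div_rpow (by positivity) (by linarith), ← Real.rpow_mul hx.le,
      ← Real.rpow_mul (by norm_num), neg_mul, mul_one_div_cancel hp0, Real.rpow_one,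
      Real.rpow_neg_one]
    ring
  have hb := harmonic_block k
  have hKpos : (0 : ℝ) ≤ 2 ^ p / (2 ^ p - 2) := div_nonneg (by positivity) (by linarith)
  constructor
  · refine (mul_le_mul_of_nonneg_left hb.1 hc).trans ?_
    rw [Finset.mul_sum]
    refine Finset.sum_le_sum fun l hl => ?_
    rw [← key _ (by positivity)]
    exact Real.rpow_le_rpow (by positivity) (hlen k l (Finset.mem_range.1 hl)).1 hs0
  · refine le_trans ?_ (mul_le_mul_of_nonneg_left hb.2 hc)
    rw [Finset.mul_sum]
    refine Finset.sum_le_sum fun l hl => ?_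
    rw [← key _ (by positivity)]
    exact Real.rpow_le_rpow (sub_nonneg.2 (C.le _)) (hlen k l (Finset.mem_range.1 hl)).2 hs0

/-! ### The two bounds for the measure -/

/-- Covering by the intervals of step `k`; the indices beyond `2^k` carry padding intervals of
arbitrarily small total gauge. -/
lemma muH_le {p : ℝ} (hp : 1 < p) (C : CantorConstruction) {L : ℝ}
    (hpos : ∀ k l : ℕ, 0 < C.len (word k l))
    (hL : Tendsto (fun k => ∑ l ∈ Finset.range (2 ^ k), C.len (word k l) ^ (1 / p))
      atTop (nhds L)) :
    muH (fun _ δ => δ ^ (1 / p)) C.cantorSet ≤ ENNReal.ofReal L := by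
  have hp0 : p ≠ 0 := by positivity
  refine iSup₂_le fun δ hδ => ?_
  refine ENNReal.le_of_forall_pos_le_add fun ε hε _ => ?_
  obtain ⟨e, he, hes⟩ := ENNReal.exists_pos_sum_of_countable
    (ENNReal.coe_ne_zero.2 hε.ne') ℕ
  obtain ⟨N, hN⟩ := C.shrink δ hδ
  have hL' := (ENNReal.tendsto_ofReal hL).add_const (ε : ℝ≥0∞)
  refine ge_of_tendsto hL' ?_
  filter_upwards [eventually_ge_atTop N] with k hk
  set c : ℕ → ℝ × ℝ := fun i => if i < 2 ^ k then (C.mid (word k i), C.len (word k i))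
    else (0, min δ ((e i : ℝ) ^ p)) with hcdef
  have hcov : (∀ i, 0 < (c i).2 ∧ (c i).2 ≤ δ) ∧
      C.cantorSet ⊆ ⋃ i, Iv (c i).1 (c i).2 := by
    constructor
    · intro i
      by_cases hi : i < 2 ^ k
      · simp only [hcdef, if_pos hi]
        exact ⟨hpos k i, (hN _ (by rw [word_length]; exact hk)).le⟩
      · simp only [hcdef, if_neg hi]
        exact ⟨lt_min hδ (Real.rpow_pos_of_pos (he i) _), min_le_left _ _⟩
    · intro x hx
      have hx' := mem_iInter.1 hx k
      simp only [mem_iUnion, mem_ofPred_eq, exists_prop] at hx'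
      obtain ⟨j, hj, hxj⟩ := hx'
      obtain ⟨l, hl, rfl⟩ := exists_word k j hj
      refine mem_iUnion.2 ⟨l, ?_⟩
      simp only [hcdef, if_pos hl, Iv, CantorConstruction.mid, CantorConstruction.len]
      constructor
      · linarith [hxj.1]
      · linarith [hxj.2]
  refine (iInf₂_le c hcov).trans ?_
  have hle : ∀ i, ENNReal.ofReal ((c i).2 ^ (1 / p)) ≤
      (if i ∈ Finset.range (2 ^ k) then ENNReal.ofReal (C.len (word k i) ^ (1 / p)) else 0)
        + e i := by
    intro i
    by_cases hi : i < 2 ^ k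
    · simp only [hcdef, if_pos hi, Finset.mem_range]
      exact le_self_add
    · simp only [hcdef, if_neg hi, Finset.mem_range, zero_add]
      rw [← ENNReal.ofReal_coe_nnreal]
      refine ENNReal.ofReal_le_ofReal ?_
      calc (min δ ((e i : ℝ) ^ p)) ^ (1 / p) ≤ ((e i : ℝ) ^ p) ^ (1 / p) :=
            Real.rpow_le_rpow (le_min hδ.le (by positivity)) (min_le_right _ _) (by positivity)
        _ = e i := by
            rw [← Real.rpow_mul (by positivity), mul_one_div_cancel hp0, Real.rpow_one]
  refine (ENNReal.tsum_le_tsum hle).trans ?_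
  rw [ENNReal.tsum_add]
  refine add_le_add (le_of_eq ?_) hes.le
  rw [ENNReal.ofReal_sum_of_nonneg fun l _ => Real.rpow_nonneg (hpos k l).le _]
  rw [tsum_eq_sum (s := Finset.range (2 ^ k)) fun i hi => if_neg hi]
  exact Finset.sum_congr rfl fun i hi => if_pos hi

/-- Any countable cover is enlarged slightly to an open one. A Lebesgue number for the open cover
puts every basic interval of a late step inside a single member, and `sum_contained_le` compares
the gauge of that member with the basic intervals it contains. -/
lemma le_muH {p : ℝ} (hp : 1 < p) (C : CantorConstruction) {L : ℝ}
    (hH : ∀ k l : ℕ, l < 2 ^ k →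
      (2 ^ p - 2) * C.len (word (k + 1) (2 * l)) ≤ C.gapLen (word k l) ∧
      (2 ^ p - 2) * C.len (word (k + 1) (2 * l + 1)) ≤ C.gapLen (word k l))
    (hL : Tendsto (fun k => ∑ l ∈ Finset.range (2 ^ k), C.len (word k l) ^ (1 / p))
      atTop (nhds L)) :
    ENNReal.ofReal L ≤ muH (fun _ δ => δ ^ (1 / p)) C.cantorSet := by
  have hs0 : 0 ≤ 1 / p := by positivity
  refine le_iSup₂_of_le 1 one_pos (le_iInf₂ fun c hc => ?_)
  obtain ⟨hc, hcov⟩ := hc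
  refine ENNReal.le_of_forall_pos_le_add fun ε hε _ => ?_
  obtain ⟨e, he, hes⟩ := ENNReal.exists_pos_sum_of_countable
    (ENNReal.coe_ne_zero.2 hε.ne') ℕ
  have henl : ∀ i, ∃ d, (c i).2 < d ∧ d ^ (1 / p) < (c i).2 ^ (1 / p) + e i := by
    intro i
    have hcont : Tendsto (fun d : ℝ => d ^ (1 / p)) (nhdsWithin (c i).2 (Ioi (c i).2))
        (nhds ((c i).2 ^ (1 / p))) :=
      ((Real.continuous_rpow_const hs0).tendsto _).mono_left nhdsWithin_le_nhds
    have hlt : (c i).2 ^ (1 / p) < (c i).2 ^ (1 / p) + e i := by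
      have : (0 : ℝ) < e i := he i
      linarith
    obtain ⟨d, h1, h2⟩ := ((hcont.eventually (gt_mem_nhds hlt)).and
      self_mem_nhdsWithin).exists
    exact ⟨d, h2, h1⟩
  choose d hd hde using henl
  set U : ℕ → Set ℝ := fun i => Ioo ((c i).1 - d i / 2) ((c i).1 + d i / 2) with hU
  have hUcov : C.cantorSet ⊆ ⋃ i, U i := by
    intro x hx
    obtain ⟨i, hi⟩ := mem_iUnion.1 (hcov hx)
    refine mem_iUnion.2 ⟨i, ?_, ?_⟩
    · linarith [hi.1, hd i]
    · linarith [hi.2, hd i]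
  obtain ⟨t, ht⟩ := (isCompact_limitSet C).elim_finite_subcover U (fun i => isOpen_Ioo) hUcov
  obtain ⟨r, hr, hleb⟩ := lebesgue_number_lemma_of_metric (isCompact_limitSet C)
    (c := fun i : t => U i) (fun i => isOpen_Ioo)
    (by intro x hx; simpa using ht hx)
  obtain ⟨N, hN⟩ := C.shrink r hr
  refine le_of_tendsto (ENNReal.tendsto_ofReal hL) ?_
  filter_upwards [eventually_ge_atTop N] with n hn
  have hnn : ∀ l, 0 ≤ C.len (word n l) ^ (1 / p) := fun l =>
    Real.rpow_nonneg (sub_nonneg.2 (C.le _)) _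
  -- each basic interval of step `n` lies in some enlarged interval of the finite subcover
  have hin : ∀ l, ∃ i ∈ t, (c i).1 - d i / 2 ≤ C.a (word n l) ∧
      C.b (word n l) ≤ (c i).1 + d i / 2 := by
    intro l
    obtain ⟨i, hi⟩ := hleb _ (left_mem_cantorSet C n l)
    have hlt := hN (word n l) (by rw [word_length]; exact hn)
    have hle := C.le (word n l)
    have ha := hi (Metric.mem_ball_self hr)
    have hb := hi (show C.b (word n l) ∈ Metric.ball (C.a (word n l)) r by
      rw [Metric.mem_ball, Real.dist_eq, abs_of_nonneg (by linarith)]; exact hlt)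
    exact ⟨i, i.2, ha.1.le, hb.2.le⟩
  have hreal : ∑ l ∈ Finset.range (2 ^ n), C.len (word n l) ^ (1 / p) ≤
      ∑ i ∈ t, ((c i).2 ^ (1 / p) + e i) := by
    calc ∑ l ∈ Finset.range (2 ^ n), C.len (word n l) ^ (1 / p)
        ≤ ∑ l ∈ Finset.range (2 ^ n), ∑ i ∈ t,
          (if (c i).1 - d i / 2 ≤ C.a (word n l) ∧ C.b (word n l) ≤ (c i).1 + d i / 2
            then C.len (word n l) ^ (1 / p) else 0) := by
          refine Finset.sum_le_sum fun l _ => ?_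
          obtain ⟨i, hit, hi⟩ := hin l
          refine le_trans (le_of_eq (if_pos hi).symm)
            (Finset.single_le_sum (f := fun i =>
              if (c i).1 - d i / 2 ≤ C.a (word n l) ∧ C.b (word n l) ≤ (c i).1 + d i / 2
              then C.len (word n l) ^ (1 / p) else 0) (fun i _ => ?_) hit)
          split_ifs
          exacts [hnn l, le_rfl]
      _ = ∑ i ∈ t, ∑ l ∈ Finset.range (2 ^ n),
          (if (c i).1 - d i / 2 ≤ C.a (word n l) ∧ C.b (word n l) ≤ (c i).1 + d i / 2
            then C.len (word n l) ^ (1 / p) else 0) := Finset.sum_comm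
      _ ≤ ∑ i ∈ t, ((c i).2 ^ (1 / p) + e i) := by
          refine Finset.sum_le_sum fun i _ => ?_
          have h := sum_contained_le hp C hH n 0 0 ((c i).1 - d i / 2) ((c i).1 + d i / 2)
            (by simp) (by linarith [hd i, (hc i).1])
          simp only [mul_zero, zero_add] at h
          refine h.trans (le_trans (le_of_eq ?_) (hde i).le)
          congr 1
          ring
  have hcn : ∀ i, 0 ≤ (c i).2 ^ (1 / p) := fun i => Real.rpow_nonneg (hc i).1.le _
  calc ENNReal.ofReal (∑ l ∈ Finset.range (2 ^ n), C.len (word n l) ^ (1 / p))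
      ≤ ENNReal.ofReal (∑ i ∈ t, ((c i).2 ^ (1 / p) + e i)) := ENNReal.ofReal_le_ofReal hreal
    _ = ∑ i ∈ t, (ENNReal.ofReal ((c i).2 ^ (1 / p)) + e i) := by
        rw [ENNReal.ofReal_sum_of_nonneg fun i _ => add_nonneg (hcn i) (NNReal.coe_nonneg (e i))]
        refine Finset.sum_congr rfl fun i _ => ?_
        rw [ENNReal.ofReal_add (hcn i) (NNReal.coe_nonneg (e i)), ENNReal.ofReal_coe_nnreal]
    _ ≤ ∑' i, (ENNReal.ofReal ((c i).2 ^ (1 / p)) + e i) := ENNReal.sum_le_tsum t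
    _ = ∑' i, ENNReal.ofReal ((c i).2 ^ (1 / p)) + ∑' i, (e i : ℝ≥0∞) := ENNReal.tsum_add
    _ ≤ _ := add_le_add le_rfl hes.le

/-- For the Cantor set `C_p` with gap lengths
`|G_l^k| = (2^k + l)^{-p}` (`p > 1`) and Lebesgue-null Cantor set, the generalized
Hausdorff measure associated to the gauge function `h(w,δ) = δ^{1/p}` satisfies
`μ_{1/p}(C_p) = 2·log 2/(2^p − 2)^{1/p}`. -/
theorem statement13 (p : ℝ) (hp : 1 < p) (C : CantorConstruction)
    (hzero : ∀ k l : ℕ, l < 2 ^ k →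
      C.len (word k l) =
        ∑' hh : ℕ, ∑ m ∈ Finset.range (2 ^ hh),
          C.gapLen (word (k + hh) (2 ^ hh * l + m)))
    (hgap : ∀ k l : ℕ, l < 2 ^ k →
      C.gapLen (word k l) = ((2 ^ k + l : ℝ)) ^ (-p)) :
    muH (fun _ δ => δ ^ (1 / p)) C.cantorSet =
      ENNReal.ofReal (2 * Real.log 2 / ((2 : ℝ) ^ p - 2) ^ (1 / p)) := by
  have h2 := two_lt_two_rpow hp
  have hlen := len_bounds hp C hzero hgap
  have hls := level_sum hp C hlen
  have hpos : ∀ k l : ℕ, 0 < C.len (word k l) := fun k l => by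
    have h1 := C.disj (word k l)
    have h2 := C.le (word k l ++ [false])
    have h3 := C.le (word k l ++ [true])
    rw [C.left0] at h2
    rw [C.right1] at h3
    exact sub_pos.2 (by linarith)
  have hL : Tendsto (fun k => ∑ l ∈ Finset.range (2 ^ k), C.len (word k l) ^ (1 / p)) atTop
      (nhds (2 * Real.log 2 / ((2 : ℝ) ^ p - 2) ^ (1 / p))) := by
    have hz : Tendsto (fun k : ℕ => ((1 : ℝ) / 2) ^ k) atTop (nhds 0) :=
      tendsto_pow_atTop_nhds_zero_of_lt_one (by norm_num) (by norm_num)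
    have e : 2 * Real.log 2 / ((2 : ℝ) ^ p - 2) ^ (1 / p) =
        2 / ((2 : ℝ) ^ p - 2) ^ (1 / p) * Real.log 2 := by ring
    rw [e]
    refine tendsto_of_tendsto_of_tendsto_of_le_of_le ?_ ?_ (fun k => (hls k).1)
      (fun k => (hls k).2)
    · simpa using (hz.const_sub (Real.log 2)).const_mul (2 / ((2 : ℝ) ^ p - 2) ^ (1 / p))
    · simpa using (hz.const_add (Real.log 2)).const_mul (2 / ((2 : ℝ) ^ p - 2) ^ (1 / p))
  have hH : ∀ k l : ℕ, l < 2 ^ k →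
      (2 ^ p - 2) * C.len (word (k + 1) (2 * l)) ≤ C.gapLen (word k l) ∧
      (2 ^ p - 2) * C.len (word (k + 1) (2 * l + 1)) ≤ C.gapLen (word k l) := by
    intro k l hl
    have hN : (0 : ℝ) < 2 ^ k + l := by positivity
    have hq : (0 : ℝ) < 2 ^ p - 2 := by linarith
    -- the bound `K (2N)^{-p}` for both children is exactly `N^{-p} / (2^p - 2)`
    have key : ∀ x : ℝ, x ≤ (2 * (2 ^ k + l : ℝ)) ^ (-p) * (2 ^ p / (2 ^ p - 2)) →
        (2 ^ p - 2) * x ≤ C.gapLen (word k l) := by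
      intro x hx
      rw [hgap k l hl]
      refine (mul_le_mul_of_nonneg_left hx hq.le).trans (le_of_eq ?_)
      rw [Real.mul_rpow (by norm_num) hN.le, Real.rpow_neg (by norm_num : (0 : ℝ) ≤ 2)]
      field_simp
    constructor
    · refine key _ (((hlen (k + 1) (2 * l) (by rw [pow_succ]; omega)).2).trans (le_of_eq ?_))
      congr 2
      push_cast; ring
    · refine key _ (((hlen (k + 1) (2 * l + 1) (by rw [pow_succ]; omega)).2).trans ?_)
      refine mul_le_mul_of_nonneg_right ?_ (by positivity)
      refine Real.rpow_le_rpow_of_nonpos (by positivity) ?_ (by linarith)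
      push_cast
      rw [pow_succ]; linarith
  exact le_antisymm (muH_le hp C hpos hL) (le_muH hp C hH hL)
end

section
/- Fix p > 1 and x > 2. Let {I_j} be a Cantor construction whose Cantor set has Lebesgue measure zero, i.e. |I_l^k| = Σ_{h≥0} Σ_{m=0}^{2^h−1} |G_{2^h·l+m}^{k+h}| for all k, l, and whose gaps satisfy |G_l^k| = (⌊x^k⌋ + l)^{−p} for all k ≥ 0 and 0 ≤ l ≤ 2^k − 1. Then: (a) for all k ≥ 0 and 0 ≤ l ≤ 2^k − 1, |I_l^k| ≥ x^{−kp}·(1 − 2·x^{−p})^{−1}·(1 + (2/x)^k)^{−p}; and (b) max_{0 ≤ l ≤ 2^k − 1} | x^{kp}·|I_l^k| − (1 − 2·x^{−p})^{−1} | → 0 as k → ∞. -/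
/-!
At step `n ≥ k` every gap inside `I_l^k` has length `(⌊x^n⌋ + i)^{-p}` with `i < 2^n`, so its
length is `x^{-np}` up to a factor between `(1 + (2/x)^k)^{-p}` and `c^{-p}`, where `c` is any
constant with `c * x^n ≤ ⌊x^n⌋` for all `n ≥ k`. There are `2^h` such gaps at step `k + h`, and
summing over `h` compares `|I_l^k|` with the geometric series
`x^{-kp} ∑ (2 x^{-p})^h = x^{-kp} (1 - 2 x^{-p})⁻¹` (`le_len` and `len_le`). The choice `c = 1/2`,
valid for all `k`, gives summability of the gap series. With `c = 1 - x^{-k}` (`k ≥ 1`) both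
factors are independent of `l` and tend to `1` as `k → ∞`, so `(b)` follows by squeezing.
-/


open MeasureTheory Set Filter
open scoped ENNReal

/-- Total length of the `2^h` gaps produced inside `I_l^k` at step `k + h`. -/
noncomputable def gapSum (C : CantorConstruction) (k l h : ℕ) : ℝ :=
  ∑ m ∈ Finset.range (2 ^ h), C.gapLen (word (k + h) (2 ^ h * l + m))

lemma position_lt {k l h m : ℕ} (hl : l < 2 ^ k) (hm : m < 2 ^ h) :
    2 ^ h * l + m < 2 ^ (k + h) := by
  calc 2 ^ h * l + m < 2 ^ h * (l + 1) := by rw [mul_add_one]; omega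
    _ ≤ 2 ^ h * 2 ^ k := Nat.mul_le_mul_left _ hl
    _ = 2 ^ (k + h) := by rw [pow_add, mul_comm]

/-- `2^h` gaps of length `(x^(k+h) D)^{-p}` contribute the `h`-th term of a geometric series. -/
lemma block_eq {p x D : ℝ} (hx : 0 < x) (hD : 0 < D) (k h : ℕ) :
    (2 : ℝ) ^ h * (x ^ (k + h) * D) ^ (-p) =
      x ^ (-(k : ℝ) * p) * D ^ (-p) * (2 * x ^ (-p)) ^ h := by
  rw [Real.mul_rpow (by positivity) hD.le, pow_add, Real.mul_rpow (by positivity) (by positivity),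
    mul_pow, ← Real.rpow_natCast x k, ← Real.rpow_mul hx.le, ← Real.rpow_natCast x h,
    ← Real.rpow_mul hx.le, ← Real.rpow_natCast (x ^ (-p)) h, ← Real.rpow_mul hx.le,
    show (k : ℝ) * -p = -(k : ℝ) * p by ring, show (h : ℝ) * -p = -p * h by ring]
  ring

lemma ratio_lt_one {p x : ℝ} (hp : 1 < p) (hx : 2 < x) : 2 * x ^ (-p) < 1 := by
  have h1 : x ^ (1 : ℝ) < x ^ p := Real.rpow_lt_rpow_of_exponent_lt (by linarith) hp
  rw [Real.rpow_one] at h1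
  rw [Real.rpow_neg (by linarith), ← div_eq_mul_inv, div_lt_one (by linarith)]
  linarith

lemma gapSum_nonneg {p x : ℝ} {C : CantorConstruction}
    (hgap : ∀ k l : ℕ, l < 2 ^ k →
      C.gapLen (word k l) = ((⌊x ^ k⌋₊ + l : ℝ)) ^ (-p))
    {k l : ℕ} (hl : l < 2 ^ k) (h : ℕ) : 0 ≤ gapSum C k l h := by
  refine Finset.sum_nonneg fun m hm => ?_
  rw [hgap _ _ (position_lt hl (Finset.mem_range.1 hm))]
  positivity

lemma gapSum_le {p x : ℝ} (hp : 1 < p) (hx : 2 < x) {C : CantorConstruction}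
    (hgap : ∀ k l : ℕ, l < 2 ^ k →
      C.gapLen (word k l) = ((⌊x ^ k⌋₊ + l : ℝ)) ^ (-p))
    {k l : ℕ} (hl : l < 2 ^ k) {c : ℝ} (hc : 0 < c)
    (hfloor : ∀ n, k ≤ n → x ^ n * c ≤ (⌊x ^ n⌋₊ : ℝ)) (h : ℕ) :
    gapSum C k l h ≤ x ^ (-(k : ℝ) * p) * c ^ (-p) * (2 * x ^ (-p)) ^ h := by
  have hx0 : 0 < x := by linarith
  rw [← block_eq hx0 hc]
  have key : ∀ m ∈ Finset.range (2 ^ h),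
      C.gapLen (word (k + h) (2 ^ h * l + m)) ≤ (x ^ (k + h) * c) ^ (-p) := fun m hm => by
    rw [hgap _ _ (position_lt hl (Finset.mem_range.1 hm))]
    refine Real.rpow_le_rpow_of_nonpos (by positivity) ?_ (by linarith)
    have := hfloor (k + h) (by omega)
    have : (0 : ℝ) ≤ ((2 ^ h * l + m : ℕ) : ℝ) := Nat.cast_nonneg _
    linarith
  simpa [gapSum] using Finset.sum_le_card_nsmul _ _ _ key

lemma le_gapSum {p x : ℝ} (hp : 1 < p) (hx : 2 < x) {C : CantorConstruction}
    (hgap : ∀ k l : ℕ, l < 2 ^ k →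
      C.gapLen (word k l) = ((⌊x ^ k⌋₊ + l : ℝ)) ^ (-p))
    {k l : ℕ} (hl : l < 2 ^ k) (h : ℕ) :
    x ^ (-(k : ℝ) * p) * (1 + (2 / x) ^ k) ^ (-p) * (2 * x ^ (-p)) ^ h ≤ gapSum C k l h := by
  have hx0 : 0 < x := by linarith
  rw [← block_eq hx0 (by positivity)]
  have key : ∀ m ∈ Finset.range (2 ^ h),
      (x ^ (k + h) * (1 + (2 / x) ^ k)) ^ (-p) ≤ C.gapLen (word (k + h) (2 ^ h * l + m)) :=
      fun m hm => by
    have hlt := position_lt hl (Finset.mem_range.1 hm)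
    rw [hgap _ _ hlt]
    have hfl : (1 : ℝ) ≤ (⌊x ^ (k + h)⌋₊ : ℝ) := by
      exact_mod_cast Nat.le_floor (by simpa using one_le_pow₀ (by linarith : (1 : ℝ) ≤ x))
    have hfl' : (⌊x ^ (k + h)⌋₊ : ℝ) ≤ x ^ (k + h) := Nat.floor_le (by positivity)
    refine Real.rpow_le_rpow_of_nonpos (by positivity) ?_ (by linarith)
    have h2 : ((2 ^ h * l + m : ℕ) : ℝ) ≤ 2 ^ (k + h) := by exact_mod_cast hlt.le
    have h3 : (2 : ℝ) ^ (k + h) = x ^ (k + h) * (2 / x) ^ (k + h) := by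
      rw [← mul_pow]; congr 1; field_simp
    have h4 : (2 / x) ^ (k + h) ≤ (2 / x) ^ k :=
      pow_le_pow_of_le_one (by positivity) (by rw [div_le_one hx0]; linarith) (by omega)
    have h5 := mul_le_mul_of_nonneg_left h4 (by positivity : 0 ≤ x ^ (k + h))
    linarith
  simpa [gapSum] using Finset.card_nsmul_le_sum _ _ _ key

/-- Without summability the infinite sum of gap lengths would be the junk value `0`, and its
comparison with the geometric series would fail. -/
lemma summable_gapSum {p x : ℝ} (hp : 1 < p) (hx : 2 < x) {C : CantorConstruction}
    (hgap : ∀ k l : ℕ, l < 2 ^ k →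
      C.gapLen (word k l) = ((⌊x ^ k⌋₊ + l : ℝ)) ^ (-p))
    {k l : ℕ} (hl : l < 2 ^ k) : Summable (gapSum C k l) := by
  have hx0 : 0 < x := by linarith
  refine Summable.of_nonneg_of_le (gapSum_nonneg hgap hl)
    (gapSum_le hp hx hgap hl (c := 1 / 2) (by norm_num) fun n _ => ?_)
    ((summable_geometric_of_lt_one (by positivity) (ratio_lt_one hp hx)).mul_left _)
  -- `t / 2 ≤ ⌊t⌋` for every `t ≥ 1`, since `⌊t⌋ ≥ 1` and `t < ⌊t⌋ + 1`.
  have h1 : (1 : ℝ) ≤ (⌊x ^ n⌋₊ : ℝ) := by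
    exact_mod_cast Nat.le_floor (by simpa using one_le_pow₀ (by linarith : (1 : ℝ) ≤ x))
  have h2 := Nat.lt_floor_add_one (x ^ n)
  linarith

/-- Lower bound from `⌊x^n⌋ + i ≤ x^n + 2^n ≤ x^n (1 + (2/x)^k)` for `n ≥ k`, `i < 2^n`. -/
lemma le_len {p x : ℝ} (hp : 1 < p) (hx : 2 < x) {C : CantorConstruction}
    (hgap : ∀ k l : ℕ, l < 2 ^ k →
      C.gapLen (word k l) = ((⌊x ^ k⌋₊ + l : ℝ)) ^ (-p))
    {k l : ℕ} (hl : l < 2 ^ k) (hzero : C.len (word k l) = ∑' h, gapSum C k l h) :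
    x ^ (-(k : ℝ) * p) * (1 - 2 * x ^ (-p))⁻¹ * (1 + (2 / x) ^ k) ^ (-p)
      ≤ C.len (word k l) := by
  have hx0 : 0 < x := by linarith
  have hr : 0 ≤ 2 * x ^ (-p) := by positivity
  have hs := (summable_geometric_of_lt_one hr (ratio_lt_one hp hx)).mul_left
    (x ^ (-(k : ℝ) * p) * (1 + (2 / x) ^ k) ^ (-p))
  have := hs.tsum_le_tsum (le_gapSum hp hx hgap hl) (summable_gapSum hp hx hgap hl)
  rw [tsum_mul_left, tsum_geometric_of_lt_one hr (ratio_lt_one hp hx), ← hzero] at this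
  linarith

/-- Upper bound from `⌊x^n⌋ ≥ x^n - 1 ≥ x^n (1 - x^{-k})` for `n ≥ k`; the assumption `1 ≤ k`
makes the last factor positive. -/
lemma len_le {p x : ℝ} (hp : 1 < p) (hx : 2 < x) {C : CantorConstruction}
    (hgap : ∀ k l : ℕ, l < 2 ^ k →
      C.gapLen (word k l) = ((⌊x ^ k⌋₊ + l : ℝ)) ^ (-p))
    {k l : ℕ} (hk : 1 ≤ k) (hl : l < 2 ^ k)
    (hzero : C.len (word k l) = ∑' h, gapSum C k l h) :
    C.len (word k l) ≤
      x ^ (-(k : ℝ) * p) * (1 - 2 * x ^ (-p))⁻¹ * (1 - x⁻¹ ^ k) ^ (-p) := by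
  have hx0 : 0 < x := by linarith
  have hr : 0 ≤ 2 * x ^ (-p) := by positivity
  have hxi : x⁻¹ < 1 := inv_lt_one_of_one_lt₀ (by linarith)
  have hc : 0 < 1 - x⁻¹ ^ k := sub_pos.2 (pow_lt_one₀ (by positivity) hxi (by omega))
  have hfloor : ∀ n, k ≤ n → x ^ n * (1 - x⁻¹ ^ k) ≤ (⌊x ^ n⌋₊ : ℝ) := fun n hn => by
    have h1 : x⁻¹ ^ n ≤ x⁻¹ ^ k := pow_le_pow_of_le_one (by positivity) hxi.le hn
    have h2 := mul_le_mul_of_nonneg_left h1 (by positivity : 0 ≤ x ^ n)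
    have h3 : x ^ n * x⁻¹ ^ n = 1 := by rw [← mul_pow, mul_inv_cancel₀ hx0.ne', one_pow]
    have h4 := Nat.lt_floor_add_one (x ^ n)
    linarith
  have hs := (summable_geometric_of_lt_one hr (ratio_lt_one hp hx)).mul_left
    (x ^ (-(k : ℝ) * p) * (1 - x⁻¹ ^ k) ^ (-p))
  have := (summable_gapSum hp hx hgap hl).tsum_le_tsum (gapSum_le hp hx hgap hl hc hfloor) hs
  rw [tsum_mul_left, tsum_geometric_of_lt_one hr (ratio_lt_one hp hx), ← hzero] at this
  linarith

/-- Both normalised bounds converge: `S (1 + s q^k)^{-p} → S` whenever `0 ≤ q < 1`. -/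
lemma tendsto_bound (S p s : ℝ) {q : ℝ} (hq0 : 0 ≤ q) (hq : q < 1) :
    Tendsto (fun k : ℕ => S * (1 + s * q ^ k) ^ (-p)) atTop (nhds S) := by
  have h1 : Tendsto (fun k : ℕ => 1 + s * q ^ k) atTop (nhds 1) := by
    simpa using ((tendsto_pow_atTop_nhds_zero_of_lt_one hq0 hq).const_mul s).const_add 1
  simpa using (h1.rpow_const (p := -p) (Or.inl one_ne_zero)).const_mul S

/-- For the Cantor set `C_{p,x}` with gap lengths
`|G_l^k| = (⌊x^k⌋ + l)^{-p}` (`p > 1`, `x > 2`) and Lebesgue-null Cantor set: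
(a) `|I_l^k| ≥ x^{−kp}·(1 − 2x^{−p})⁻¹·(1 + (2/x)^k)^{−p}`, and
(b) `max_{0 ≤ l < 2^k} |x^{kp}·|I_l^k| − (1 − 2x^{−p})⁻¹| → 0` as `k → ∞`. -/
theorem statement14 (p x : ℝ) (hp : 1 < p) (hx : 2 < x) (C : CantorConstruction)
    (hzero : ∀ k l : ℕ, l < 2 ^ k →
      C.len (word k l) =
        ∑' hh : ℕ, ∑ m ∈ Finset.range (2 ^ hh),
          C.gapLen (word (k + hh) (2 ^ hh * l + m)))
    (hgap : ∀ k l : ℕ, l < 2 ^ k →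
      C.gapLen (word k l) = ((⌊x ^ k⌋₊ + l : ℝ)) ^ (-p)) :
    (∀ k l : ℕ, l < 2 ^ k →
      x ^ (-(k : ℝ) * p) * (1 - 2 * x ^ (-p))⁻¹ * (1 + (2 / x) ^ k) ^ (-p)
        ≤ C.len (word k l)) ∧
    (∀ ε > (0 : ℝ), ∃ K : ℕ, ∀ k : ℕ, K ≤ k → ∀ l : ℕ, l < 2 ^ k →
      |x ^ ((k : ℝ) * p) * C.len (word k l) - (1 - 2 * x ^ (-p))⁻¹| < ε) := by
  have hx0 : 0 < x := by linarith
  refine ⟨fun k l hl => le_len hp hx hgap hl (hzero k l hl), fun ε hε => ?_⟩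
  have hL := tendsto_bound (1 - 2 * x ^ (-p))⁻¹ p 1 (q := 2 / x) (by positivity)
    (by rw [div_lt_one hx0]; exact hx)
  have hU := tendsto_bound (1 - 2 * x ^ (-p))⁻¹ p (-1) (q := x⁻¹) (by positivity)
    (inv_lt_one_of_one_lt₀ (by linarith))
  obtain ⟨K, hK⟩ := eventually_atTop.1 ((hL.eventually_const_lt (sub_lt_self _ hε)).and
    ((hU.eventually_lt_const (lt_add_of_pos_right _ hε)).and (eventually_ge_atTop 1)))
  refine ⟨K, fun k hk l hl => ?_⟩
  obtain ⟨h1, h2, h3⟩ := hK k hk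
  have hpow : 0 < x ^ ((k : ℝ) * p) := by positivity
  have hcancel : x ^ ((k : ℝ) * p) * x ^ (-(k : ℝ) * p) = 1 := by
    rw [← Real.rpow_add hx0, show (k : ℝ) * p + -(k : ℝ) * p = 0 by ring, Real.rpow_zero]
  have h4 := mul_le_mul_of_nonneg_left (le_len hp hx hgap hl (hzero k l hl)) hpow.le
  have h5 := mul_le_mul_of_nonneg_left (len_le hp hx hgap h3 hl (hzero k l hl)) hpow.le
  simp only [← mul_assoc, hcancel, one_mul] at h1 h4 h5
  rw [show 1 + -1 * x⁻¹ ^ k = 1 - x⁻¹ ^ k by ring] at h2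
  rw [abs_lt]
  constructor <;> linarith
end
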